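/- arXiv:1910.06035 — 5 statements merged into one kernel-verified Lean document; each statement's English description precedes it below -/
import Mathlib

section
/- Let E be an n×n real symmetric positive definite matrix (viewed as complex Hermitian), F an n×n Hermitian positive definite complex matrix with E ≥ F⁻¹ in the Loewner order, and G an n×n real symmetric positive semidefinite matrix with tr G = 1. Then for every s ∈ [−1,1] with s ≠ 0, (tr(G E^s))^{1/s} ≥ (tr(G F^{−s}))^{1/s}. -/
open Matrix ComplexOrder

/-- The matrix power `X ^ s` of a positive definite Hermitian matrix, defined by applying
`x ↦ x ^ s` to the eigenvalues in a spectral decomposition. -/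
noncomputable def matPow {n : ℕ} {X : Matrix (Fin n) (Fin n) ℂ} (hX : X.IsHermitian)
    (s : ℝ) : Matrix (Fin n) (Fin n) ℂ :=
  hX.cfc (fun x => x ^ s)

/-!
For `0 < s ≤ 1` the function `x ↦ x ^ s` is operator monotone, so `F⁻¹ ≤ E` gives
`F ^ (-s) ≤ E ^ s`. For `-1 ≤ s < 0` the same bound, applied to `E⁻¹ ≤ F` with exponent `-s`,
gives `E ^ s ≤ F ^ (-s)`, and the outer power `1 / s` reverses the inequality again. Only
positivity of the functional `X ↦ tr (G X)` enters, so the argument takes place in a C⋆-algebra.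
-/

section CStarAlgebra

open scoped Ring

variable {A : Type*} [CStarAlgebra A] [PartialOrder A] [StarOrderedRing A]

lemma ringInverse_rpow {a : A} (ha : IsStrictlyPositive a) (s : ℝ) : a⁻¹ʳ ^ s = a ^ (-s) := by
  rw [CFC.inverse_eq_rpow_neg_one ha, CFC.rpow_rpow a (-1) s (by norm_num) ha, neg_one_mul]

lemma rpow_neg_le_rpow_of_ringInverse_le {a b : A} (hb : IsStrictlyPositive b) (hab : b⁻¹ʳ ≤ a)
    {s : ℝ} (hs : s ∈ Set.Icc 0 1) : b ^ (-s) ≤ a ^ s := by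
  rw [← ringInverse_rpow hb]
  exact CFC.rpow_le_rpow hs hab

lemma ringInverse_le_of_ringInverse_le {a b : A} (hb : IsStrictlyPositive b) (hab : b⁻¹ʳ ≤ a) :
    a⁻¹ʳ ≤ b := by
  simpa only [Ring.inverse_inverse hb.isUnit] using
    CStarAlgebra.ringInverse_le_ringInverse hab hb.ringInverse

lemma map_pos_of_isStrictlyPositive (φ : A →ₚ[ℝ] ℝ) (hφ : 0 < φ 1) {a : A}
    (ha : IsStrictlyPositive a) : 0 < φ a := by
  have : Nontrivial A := ⟨1, 0, fun h ↦ hφ.ne' (by rw [h, map_zero])⟩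
  obtain ⟨r, hr, hra⟩ := (CFC.exists_pos_algebraMap_le_iff ha.isSelfAdjoint).2
    fun x hx ↦ ha.spectrum_pos hx
  calc
    0 < r * φ 1 := mul_pos hr hφ
    _ = φ (algebraMap ℝ A r) := by rw [Algebra.algebraMap_eq_smul_one, map_smul, smul_eq_mul]
    _ ≤ φ a := OrderHomClass.mono φ hra

theorem generalized_mean_qcrb_pow_general (φ : A →ₚ[ℝ] ℝ) (hφ : 0 < φ 1) {E F : A}
    (hF : IsStrictlyPositive F) (hEF : F⁻¹ʳ ≤ E) {s : ℝ} (hs : s ∈ Set.Icc (-1) 1) (hs0 : s ≠ 0) :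
    φ (E ^ s) ^ (1 / s) ≥ φ (F ^ (-s)) ^ (1 / s) := by
  rcases hs0.lt_or_gt with hneg | hpos
  · have hE : IsStrictlyPositive E := hF.ringInverse.of_le hEF
    have hpow : E ^ s ≤ F ^ (-s) := by
      simpa only [neg_neg] using rpow_neg_le_rpow_of_ringInverse_le hE
        (ringInverse_le_of_ringInverse_le hF hEF) ⟨neg_nonneg.2 hneg.le, neg_le.1 hs.1⟩
    exact Real.rpow_le_rpow_of_nonpos (map_pos_of_isStrictlyPositive φ hφ (hE.rpow E s))
      (OrderHomClass.mono φ hpow) (one_div_nonpos.2 hneg.le)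
  · have hpow : F ^ (-s) ≤ E ^ s := rpow_neg_le_rpow_of_ringInverse_le hF hEF ⟨hpos.le, hs.2⟩
    exact Real.rpow_le_rpow (map_nonneg φ CFC.rpow_nonneg) (OrderHomClass.mono φ hpow)
      (one_div_nonneg.2 hpos.le)

end CStarAlgebra

section Matrix

open scoped MatrixOrder Matrix.Norms.L2Operator

lemma trace_mul_nonneg_of_posSemidef {ι 𝕜 : Type*} [Fintype ι] [RCLike 𝕜] {A B : Matrix ι ι 𝕜}
    (hA : A.PosSemidef) (hB : B.PosSemidef) : 0 ≤ (A * B).trace := by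
  classical
  obtain ⟨C, rfl⟩ := CStarAlgebra.nonneg_iff_eq_star_mul_self.1 hB.nonneg
  rw [← mul_assoc, trace_mul_comm, ← mul_assoc]
  exact (hA.mul_mul_conjTranspose_same C).trace_nonneg

/-- The positive functional `X ↦ Re tr (G X)` attached to a positive semidefinite weight `G`.
It is real-valued and real-linear, so that its values can be raised to real powers. -/
noncomputable def weightedTrace {ι : Type*} [Fintype ι] {G : Matrix ι ι ℂ} (hG : G.PosSemidef) :
    Matrix ι ι ℂ →ₚ[ℝ] ℝ :=
  .mk₀ (Complex.reLm ∘ₗ traceLinearMap ι ℝ ℂ ∘ₗ LinearMap.mulLeft ℝ G) fun _ hX ↦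
    (Complex.nonneg_iff.1 (trace_mul_nonneg_of_posSemidef hG hX.posSemidef)).1

lemma weightedTrace_one {ι : Type*} [Fintype ι] [DecidableEq ι] {G : Matrix ι ι ℂ}
    (hG : G.PosSemidef) : weightedTrace hG 1 = G.trace.re :=
  congrArg (fun M : Matrix ι ι ℂ ↦ M.trace.re) (mul_one G)

lemma matPow_eq_rpow {n : ℕ} {X : Matrix (Fin n) (Fin n) ℂ} (hX : X.PosSemidef) (s : ℝ) :
    matPow hX.1 s = X ^ s := by
  rw [CFC.rpow_eq_cfc_real hX.nonneg, hX.1.cfc_eq, matPow]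

end Matrix

/-- For a real symmetric positive definite `E`, a Hermitian positive definite `F`
with `E ≥ F⁻¹` in the Loewner order, and a real symmetric positive semidefinite weight `G`
with `tr G = 1`, for every `s ∈ [-1,1]` with `s ≠ 0` we have
`(tr (G E^s))^(1/s) ≥ (tr (G F^(-s)))^(1/s)`. -/
theorem generalized_mean_qcrb_pow {n : ℕ} (E F G : Matrix (Fin n) (Fin n) ℂ)
    (hEre : ∀ i j, (E i j).im = 0) (hE : E.PosDef)
    (hF : F.PosDef)
    (hEF : (E - F⁻¹).PosSemidef)
    (hGre : ∀ i j, (G i j).im = 0) (hG : G.PosSemidef) (hGtr : G.trace = 1)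
    (s : ℝ) (hs : s ∈ Set.Icc (-1 : ℝ) 1) (hs0 : s ≠ 0) :
    ((G * matPow hE.1 s).trace.re) ^ (1/s) ≥ ((G * matPow hF.1 (-s)).trace.re) ^ (1/s) := by
  have hone : 0 < weightedTrace hG 1 := by
    simp only [weightedTrace_one, hGtr, Complex.one_re, one_pos]
  rw [nonsing_inv_eq_ringInverse] at hEF
  rw [matPow_eq_rpow hE.posSemidef, matPow_eq_rpow hF.posSemidef]
  open scoped MatrixOrder Matrix.Norms.L2Operator in
  exact generalized_mean_qcrb_pow_general (weightedTrace hG) hone hF.isStrictlyPositive hEF hs hs0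
end

section
/- Let E be an n×n real symmetric positive definite matrix (viewed as complex Hermitian), F an n×n Hermitian positive definite complex matrix with E ≥ F⁻¹ in the Loewner order, and G an n×n real symmetric positive semidefinite matrix with tr G = 1. Then tr(G log E) ≥ −tr(G log F); equivalently, the weighted geometric means satisfy exp(tr(G log E)) ≥ 1/exp(tr(G log F)). In particular, for G = I/n this gives (det E)^{1/n} ≥ (det F)^{−1/n}. -/
open Matrix ComplexOrder

/-- The matrix logarithm `log X` of a positive definite Hermitian matrix, defined by applying
the natural logarithm to the eigenvalues in a spectral decomposition. -/
noncomputable def matLog {n : ℕ} {X : Matrix (Fin n) (Fin n) ℂ} (hX : X.IsHermitian) :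
    Matrix (Fin n) (Fin n) ℂ :=
  hX.cfc Real.log

/-!
The logarithm is operator monotone, so `F⁻¹ ≤ E` gives `-log F = log F⁻¹ ≤ log E`. Pairing with a
positive semidefinite weight `G` preserves the inequality, since
`tr (G H) = tr (B H Bᴴ) ≥ 0` for `G = Bᴴ B` and `H ≥ 0`. The determinant inequality is the case
`G = I`, as `tr (log X) = log (det X)`.
-/

open CFC
open scoped MatrixOrder Matrix.Norms.L2Operator Ring

section ContinuousFunctionalCalculus

lemma log_ringInverse {A : Type*} [NormedRing A] [StarRing A] [NormedAlgebra ℝ A]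
    [ContinuousFunctionalCalculus ℝ A IsSelfAdjoint] {a : A} (ha_unit : IsUnit a)
    (ha : IsSelfAdjoint a) : log a⁻¹ʳ = -log a := by
  have h_ne : ∀ x ∈ spectrum ℝ a, x ≠ 0 :=
    fun _ hx hx₀ ↦ spectrum.zero_notMem ℝ ha_unit (hx₀ ▸ hx)
  have h_cont : ContinuousOn Real.log ((·⁻¹) '' spectrum ℝ a) := by fun_prop (disch := aesop)
  calc
    log a⁻¹ʳ = cfc (fun x ↦ Real.log x⁻¹) a := by
      rw [log, ← cfc_ringInverse_id (R := ℝ) a ha_unit, ← cfc_comp' Real.log (·⁻¹) a h_cont]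
    _ = -log a := by simp_rw [Real.log_inv, cfc_neg, log]

lemma neg_log_le_log_of_ringInverse_le {A : Type*} [CStarAlgebra A] [PartialOrder A]
    [StarOrderedRing A] {a b : A} (ha : IsStrictlyPositive a) (hab : a⁻¹ʳ ≤ b) :
    -log a ≤ log b := by
  rw [← log_ringInverse ha.isUnit ha.isSelfAdjoint]
  exact log_le_log hab ha.ringInverse

end ContinuousFunctionalCalculus

section RCLikeMatrix

variable {ι 𝕜 : Type*} [Fintype ι] [RCLike 𝕜]

lemma trace_mul_nonneg_of_posSemidef_s2 {G H : Matrix ι ι 𝕜} (hG : G.PosSemidef)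
    (hH : H.PosSemidef) : 0 ≤ (G * H).trace := by
  classical
  obtain ⟨B, rfl⟩ := CStarAlgebra.nonneg_iff_eq_star_mul_self.mp hG.nonneg
  rw [Matrix.mul_assoc, trace_mul_comm]
  exact (hH.mul_mul_conjTranspose_same B).trace_nonneg

lemma trace_cfc_eq_sum_eigenvalues [DecidableEq ι] {X : Matrix ι ι 𝕜} (hX : X.IsHermitian)
    (f : ℝ → ℝ) : (cfc f X).trace = ∑ i, (f (hX.eigenvalues i) : 𝕜) := by
  rw [hX.cfc_eq, IsHermitian.cfc, Unitary.conjStarAlgAut_apply, trace_mul_cycle,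
    Unitary.coe_star_mul_self, Matrix.one_mul, trace_diagonal]
  rfl

lemma trace_cfc_log_eq_log_det [DecidableEq ι] {X : Matrix ι ι 𝕜} (hX : X.PosDef) :
    (cfc Real.log X).trace = (Real.log (RCLike.re X.det) : 𝕜) := by
  rw [trace_cfc_eq_sum_eigenvalues hX.1, hX.1.det_eq_prod_eigenvalues,
    ← RCLike.ofReal_prod, RCLike.ofReal_re,
    Real.log_prod fun i _ ↦ (hX.eigenvalues_pos i).ne', RCLike.ofReal_sum]

lemma re_det_rpow_eq_exp_trace_log [DecidableEq ι] {X : Matrix ι ι 𝕜} (hX : X.PosDef) (r : ℝ) :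
    RCLike.re X.det ^ r = Real.exp (r * RCLike.re (cfc Real.log X).trace) := by
  rw [trace_cfc_log_eq_log_det hX, RCLike.ofReal_re, mul_comm,
    Real.rpow_def_of_pos (RCLike.pos_iff.mp hX.det_pos).1]

end RCLikeMatrix

section ComplexMatrix

variable {ι : Type*} [Fintype ι] [DecidableEq ι] {E F G : Matrix ι ι ℂ}

lemma neg_re_trace_mul_log_le_of_inv_le (hF : F.PosDef) (hFE : F⁻¹ ≤ E) (hG : G.PosSemidef) :
    -(G * log F).trace.re ≤ (G * log E).trace.re := by
  have h_log : -log F ≤ log E := by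
    rw [nonsing_inv_eq_ringInverse] at hFE
    exact neg_log_le_log_of_ringInverse_le hF.isStrictlyPositive hFE
  have h_trace : 0 ≤ (G * (log E - -log F)).trace := trace_mul_nonneg_of_posSemidef_s2 hG h_log
  rw [sub_neg_eq_add, Matrix.mul_add, trace_add, Complex.nonneg_iff, Complex.add_re] at h_trace
  linarith

lemma re_det_rpow_neg_le_of_inv_le (hF : F.PosDef) (hFE : F⁻¹ ≤ E) {r : ℝ} (hr : 0 ≤ r) :
    F.det.re ^ (-r) ≤ E.det.re ^ r := by
  have hE : E.PosDef := by simpa using hF.inv.add_posSemidef hFE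
  have h_trace : -(log F).trace.re ≤ (log E).trace.re := by
    simpa using neg_re_trace_mul_log_le_of_inv_le hF hFE PosSemidef.one
  calc
    F.det.re ^ (-r) = Real.exp (-r * (log F).trace.re) := re_det_rpow_eq_exp_trace_log hF (-r)
    _ = Real.exp (r * -(log F).trace.re) := by rw [neg_mul_comm]
    _ ≤ Real.exp (r * (log E).trace.re) := by gcongr
    _ = E.det.re ^ r := (re_det_rpow_eq_exp_trace_log hE r).symm

theorem geometric_mean_qcrb_general (hF : F.PosDef) (hEF : (E - F⁻¹).PosSemidef)
    (hG : G.PosSemidef) :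
    -(G * log F).trace.re ≤ (G * log E).trace.re ∧
    1 / Real.exp (G * log F).trace.re ≤ Real.exp (G * log E).trace.re ∧
    F.det.re ^ (-(Fintype.card ι : ℝ)⁻¹) ≤ E.det.re ^ (Fintype.card ι : ℝ)⁻¹ := by
  have h_trace := neg_re_trace_mul_log_le_of_inv_le hF hEF hG
  refine ⟨h_trace, ?_, re_det_rpow_neg_le_of_inv_le hF hEF (by positivity)⟩
  rwa [one_div, ← Real.exp_neg, Real.exp_le_exp]

end ComplexMatrix

lemma matLog_eq_log {n : ℕ} {X : Matrix (Fin n) (Fin n) ℂ} (hX : X.IsHermitian) :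
    matLog hX = log X :=
  (hX.cfc_eq Real.log).symm

/-- For a real symmetric positive definite `E`, a Hermitian positive definite `F`
with `E ≥ F⁻¹` in the Loewner order, and a real symmetric positive semidefinite weight `G`
with `tr G = 1`, we have `tr (G log E) ≥ -tr (G log F)`; equivalently
`exp (tr (G log E)) ≥ 1 / exp (tr (G log F))`.  In particular, for `G = I/n` this gives
`(det E)^(1/n) ≥ (det F)^(-1/n)`. -/
theorem geometric_mean_qcrb {n : ℕ} (E F G : Matrix (Fin n) (Fin n) ℂ)
    (hEre : ∀ i j, (E i j).im = 0) (hE : E.PosDef)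
    (hF : F.PosDef)
    (hEF : (E - F⁻¹).PosSemidef)
    (hGre : ∀ i j, (G i j).im = 0) (hG : G.PosSemidef) (hGtr : G.trace = 1) :
    (G * matLog hE.1).trace.re ≥ -((G * matLog hF.1).trace.re) ∧
    Real.exp ((G * matLog hE.1).trace.re) ≥ 1 / Real.exp ((G * matLog hF.1).trace.re) ∧
    (G = ((n : ℂ))⁻¹ • (1 : Matrix (Fin n) (Fin n) ℂ) →
      (E.det.re) ^ ((n : ℝ))⁻¹ ≥ (F.det.re) ^ (-((n : ℝ))⁻¹)) := by
  have ⟨h_trace, h_exp, h_det⟩ := geometric_mean_qcrb_general hF hEF hG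
  simp only [matLog_eq_log]
  exact ⟨h_trace, h_exp, fun _ ↦ by rwa [Fintype.card_fin] at h_det⟩
end

section
/- Let A be an n×n real symmetric matrix (viewed as complex Hermitian) and B an n×n complex Hermitian matrix with A ≥ B in the Loewner order. Then tr A ≥ tr(Re B) + ‖Im B‖₁, where Re B and Im B are the entrywise real and imaginary parts of B and ‖M‖₁ := tr √(MᴴM) is the trace norm. -/
/-!
The difference `P = A - B` is positive semidefinite, and `Im P = -Im B` because `A` is real, so it
suffices to show `‖Im P‖₁ ≤ tr P`. The matrices `Re P ± i Im P` are `P` and its transpose, both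
positive semidefinite, so the Hermitian matrix `H = i Im P` satisfies `-Re P ≤ H ≤ Re P`. Comparing
diagonal entries in an orthonormal eigenbasis of `H` bounds the sum of the `|λᵢ(H)|`, which is
`‖H‖₁ = ‖Im P‖₁`, by `tr (Re P) = tr P`.
-/

open Matrix ComplexOrder

/-- The entrywise real part of a complex matrix, `Re B := (B + B̄)/2`. -/
def reMat {n : ℕ} (B : Matrix (Fin n) (Fin n) ℂ) : Matrix (Fin n) (Fin n) ℂ :=
  fun i j => ((B i j).re : ℂ)

/-- The entrywise imaginary part of a complex matrix, `Im B := (B - B̄)/(2i)`. -/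
def imMat {n : ℕ} (B : Matrix (Fin n) (Fin n) ℂ) : Matrix (Fin n) (Fin n) ℂ :=
  fun i j => ((B i j).im : ℂ)

/-- The trace (Schatten-1) norm `‖M‖₁ := tr √(Mᴴ M)`, where the square root of the positive
semidefinite matrix `Mᴴ M` is taken by applying `√` to the eigenvalues in a spectral
decomposition. -/
noncomputable def traceNorm {n : ℕ} (M : Matrix (Fin n) (Fin n) ℂ) : ℝ :=
  ((Matrix.posSemidef_conjTranspose_mul_self M).1.cfc Real.sqrt).trace.re

section UnitaryConjugation

variable {R ι : Type*} [CommRing R] [StarRing R] [Fintype ι] [DecidableEq ι]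

theorem trace_conjStarAlgAut (U : unitary (Matrix ι ι R)) (M : Matrix ι ι R) :
    (Unitary.conjStarAlgAut R _ U M).trace = M.trace := by
  rw [Unitary.conjStarAlgAut_apply, trace_mul_cycle, Unitary.coe_star_mul_self, one_mul]

theorem posSemidef_conjStarAlgAut [PartialOrder R] {M : Matrix ι ι R} (hM : M.PosSemidef)
    (U : unitary (Matrix ι ι R)) : (Unitary.conjStarAlgAut R _ U M).PosSemidef := by
  rw [Unitary.conjStarAlgAut_apply]
  exact hM.mul_mul_conjTranspose_same (U : Matrix ι ι R)

end UnitaryConjugation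

section EigenvalueTrace

variable {𝕜 ι : Type*} [RCLike 𝕜] [Fintype ι] [DecidableEq ι]

theorem trace_cfc_eq_sum_eigenvalues_s3 {H : Matrix ι ι 𝕜} (hH : H.IsHermitian) (f : ℝ → ℝ) :
    (cfc f H).trace = ∑ i, (f (hH.eigenvalues i) : 𝕜) := by
  rw [hH.cfc_eq, IsHermitian.cfc, trace_conjStarAlgAut, trace_diagonal]
  simp only [Function.comp_apply]

theorem sum_abs_le_re_trace_of_posSemidef_diagonal {P : Matrix ι ι 𝕜} {d : ι → ℝ}
    (hsub : (P - diagonal (RCLike.ofReal ∘ d)).PosSemidef)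
    (hadd : (P + diagonal (RCLike.ofReal ∘ d)).PosSemidef) :
    ∑ i, |d i| ≤ RCLike.re P.trace := by
  rw [trace, map_sum]
  refine Finset.sum_le_sum fun i _ => abs_le'.2 ⟨?_, ?_⟩
  · have hi := (RCLike.nonneg_iff.1 (hsub.diag_nonneg (i := i))).1
    simpa using hi
  · have hi := (RCLike.nonneg_iff.1 (hadd.diag_nonneg (i := i))).1
    simpa [neg_le_iff_add_nonneg] using hi

theorem sum_abs_eigenvalues_le_re_trace {P H : Matrix ι ι 𝕜} (hH : H.IsHermitian)
    (hsub : (P - H).PosSemidef) (hadd : (P + H).PosSemidef) :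
    ∑ i, |hH.eigenvalues i| ≤ RCLike.re P.trace := by
  rw [← trace_conjStarAlgAut (star hH.eigenvectorUnitary) P]
  apply sum_abs_le_re_trace_of_posSemidef_diagonal <;>
    rw [← hH.conjStarAlgAut_star_eigenvectorUnitary]
  · simpa only [map_sub] using posSemidef_conjStarAlgAut hsub _
  · simpa only [map_add] using posSemidef_conjStarAlgAut hadd _

end EigenvalueTrace

section TraceNorm

variable {n : ℕ}

theorem traceNorm_eq_re_trace_cfc (M : Matrix (Fin n) (Fin n) ℂ) :
    traceNorm M = (cfc Real.sqrt (Mᴴ * M)).trace.re := by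
  rw [traceNorm, IsHermitian.cfc_eq]

theorem traceNorm_smul (c : ℂ) (M : Matrix (Fin n) (Fin n) ℂ) :
    traceNorm (c • M) = ‖c‖ * traceNorm M := by
  have hMM : IsSelfAdjoint (Mᴴ * M) := isHermitian_conjTranspose_mul_self M
  have hsmul : (c • M)ᴴ * (c • M) = (‖c‖ ^ 2 : ℝ) • (Mᴴ * M) := by
    rw [conjTranspose_smul, smul_mul_smul_comm, Complex.star_def, Complex.conj_mul',
      ← Complex.ofReal_pow, Complex.coe_smul]
  have hsqrt (x : ℝ) : √(‖c‖ ^ 2 • x) = ‖c‖ * √x := by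
    rw [smul_eq_mul, Real.sqrt_mul (sq_nonneg _), Real.sqrt_sq (norm_nonneg c)]
  rw [traceNorm_eq_re_trace_cfc, traceNorm_eq_re_trace_cfc, hsmul,
    ← cfc_comp_smul _ _ _ (by fun_prop) hMM]
  simp only [hsqrt]
  rw [cfc_const_mul _ _ _ (by fun_prop), trace_smul, Complex.smul_re, smul_eq_mul]

theorem traceNorm_neg (M : Matrix (Fin n) (Fin n) ℂ) : traceNorm (-M) = traceNorm M := by
  simpa using traceNorm_smul (-1) M

theorem traceNorm_eq_sum_abs_eigenvalues {H : Matrix (Fin n) (Fin n) ℂ} (hH : H.IsHermitian) :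
    traceNorm H = ∑ i, |hH.eigenvalues i| := by
  have habs : cfc Real.sqrt (H ^ 2) = cfc (fun x : ℝ => |x|) H :=
    calc cfc Real.sqrt (H ^ 2) = cfc (fun x : ℝ => √(x ^ 2)) H :=
          (cfc_comp_pow Real.sqrt 2 H (by fun_prop) hH).symm
      _ = cfc (fun x : ℝ => |x|) H := by simp only [Real.sqrt_sq_eq_abs]
  rw [traceNorm_eq_re_trace_cfc, hH.eq, ← sq, habs, trace_cfc_eq_sum_eigenvalues_s3 hH]
  simp

theorem traceNorm_le_re_trace {P H : Matrix (Fin n) (Fin n) ℂ} (hH : H.IsHermitian)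
    (hsub : (P - H).PosSemidef) (hadd : (P + H).PosSemidef) : traceNorm H ≤ P.trace.re := by
  rw [traceNorm_eq_sum_abs_eigenvalues hH]
  exact sum_abs_eigenvalues_le_re_trace hH hsub hadd

end TraceNorm

section RealImaginaryParts

variable {n : ℕ}

theorem reMat_add_I_smul_imMat (B : Matrix (Fin n) (Fin n) ℂ) :
    reMat B + Complex.I • imMat B = B := by
  ext i j
  apply Complex.ext <;> simp [reMat, imMat]

theorem reMat_sub_I_smul_imMat (B : Matrix (Fin n) (Fin n) ℂ) :
    reMat B - Complex.I • imMat B = Bᴴᵀ := by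
  ext i j
  apply Complex.ext <;> simp [reMat, imMat]

theorem re_trace_reMat (B : Matrix (Fin n) (Fin n) ℂ) : (reMat B).trace.re = B.trace.re := by
  simp [trace, reMat]

theorem isHermitian_I_smul_imMat {B : Matrix (Fin n) (Fin n) ℂ} (hB : B.IsHermitian) :
    (Complex.I • imMat B).IsHermitian := by
  refine IsHermitian.ext fun i j => ?_
  simp [imMat, ← hB.apply i j]

theorem imMat_sub_of_im_eq_zero {A : Matrix (Fin n) (Fin n) ℂ} (hA : ∀ i j, (A i j).im = 0)
    (B : Matrix (Fin n) (Fin n) ℂ) : imMat (A - B) = -imMat B := by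
  ext i j
  simp [imMat, hA]

theorem traceNorm_imMat_le_re_trace {P : Matrix (Fin n) (Fin n) ℂ} (hP : P.PosSemidef) :
    traceNorm (imMat P) ≤ P.trace.re := by
  have hsub : (reMat P - Complex.I • imMat P).PosSemidef := by
    rw [reMat_sub_I_smul_imMat, hP.isHermitian.eq]
    exact hP.transpose
  have hadd : (reMat P + Complex.I • imMat P).PosSemidef := by
    rwa [reMat_add_I_smul_imMat]
  calc traceNorm (imMat P) = traceNorm (Complex.I • imMat P) := by simp [traceNorm_smul]
    _ ≤ (reMat P).trace.re :=
      traceNorm_le_re_trace (isHermitian_I_smul_imMat hP.isHermitian) hsub hadd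
    _ = P.trace.re := re_trace_reMat P

end RealImaginaryParts

theorem trace_ge_re_add_traceNorm_im_general {n : ℕ} (A B : Matrix (Fin n) (Fin n) ℂ)
    (hAre : ∀ i j, (A i j).im = 0) (hAB : (A - B).PosSemidef) :
    A.trace.re ≥ (reMat B).trace.re + traceNorm (imMat B) := by
  have hgap : traceNorm (imMat B) ≤ A.trace.re - B.trace.re := by
    simpa only [imMat_sub_of_im_eq_zero hAre, traceNorm_neg, trace_sub, Complex.sub_re]
      using traceNorm_imMat_le_re_trace hAB
  rw [re_trace_reMat]
  linarith

/-- If `A` is real symmetric (viewed as complex Hermitian), `B` is Hermitian and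
`A ≥ B` in the Loewner order, then `tr A ≥ tr (Re B) + ‖Im B‖₁`. -/
theorem trace_ge_re_add_traceNorm_im {n : ℕ} (A B : Matrix (Fin n) (Fin n) ℂ)
    (hAre : ∀ i j, (A i j).im = 0) (hA : A.IsHermitian)
    (hB : B.IsHermitian)
    (hAB : (A - B).PosSemidef) :
    A.trace.re ≥ (reMat B).trace.re + traceNorm (imMat B) :=
  trace_ge_re_add_traceNorm_im_general A B hAre hAB
end

section
/- Let X be an n×n real symmetric positive definite matrix and G an n×n real symmetric positive semidefinite matrix with tr G = 1. Define M_s(X) := (tr(G X^s))^{1/s} for s ∈ [−1,1] with s ≠ 0, and M_0(X) := exp(tr(G log X)). Then the weighted generalized means are comparable: M_r(X) ≤ M_s(X) whenever −1 ≤ r ≤ s ≤ 1. -/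
open Matrix ComplexOrder

/-- The weighted generalized `s`-mean of a positive definite Hermitian matrix `X` with weight
`G`: `(tr (G X^s))^(1/s)` for `s ≠ 0` and `exp (tr (G log X))` for `s = 0`, the matrix power
and logarithm being taken via the spectral decomposition. -/
noncomputable def genMean {n : ℕ} (G : Matrix (Fin n) (Fin n) ℂ)
    {X : Matrix (Fin n) (Fin n) ℂ} (hX : X.IsHermitian) (s : ℝ) : ℝ :=
  if s = 0 then Real.exp ((G * hX.cfc Real.log).trace.re)
  else ((G * hX.cfc (fun x => x ^ s)).trace.re) ^ (1/s)

/-! In an orthonormal eigenbasis `uᵢ` of `X`, with eigenvalues `λᵢ`, one has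
`tr (G f(X)) = ∑ᵢ ⟨uᵢ, G uᵢ⟩ f(λᵢ)`. The numbers `⟨uᵢ, G uᵢ⟩` are nonnegative and sum to `tr G = 1`,
so `M_s(X)` is the classical weighted power mean of the eigenvalues, which is monotone in `s`: for
nonnegative exponents by AM-GM and Jensen's inequality, and for nonpositive ones by the reflection
`M_s(λ) = M_{-s}(λ⁻¹)⁻¹`. -/

section PowerMean

variable {ι : Type*} {t : Finset ι} {w x : ι → ℝ} {r s : ℝ}

/-- The power mean of exponent `s` of the numbers `x i`, `i ∈ t`, with weights `w i`. The exponent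
`0` stands for the weighted geometric mean, the limit as `s → 0` for positive `x i` and weights of
sum `1`; the definition itself does not normalize the weights. -/
noncomputable def powerMean (t : Finset ι) (w x : ι → ℝ) (s : ℝ) : ℝ :=
  if s = 0 then ∏ i ∈ t, x i ^ w i else (∑ i ∈ t, w i * x i ^ s) ^ (1 / s)

theorem powerMean_zero : powerMean t w x 0 = ∏ i ∈ t, x i ^ w i :=
  if_pos rfl

theorem powerMean_of_ne_zero (hs : s ≠ 0) :
    powerMean t w x s = (∑ i ∈ t, w i * x i ^ s) ^ (1 / s) :=
  if_neg hs

theorem powerMean_zero_eq_exp_sum_log (hx : ∀ i ∈ t, 0 < x i) :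
    powerMean t w x 0 = Real.exp (∑ i ∈ t, w i * Real.log (x i)) := by
  rw [powerMean_zero, Real.exp_sum]
  refine Finset.prod_congr rfl fun i hi => ?_
  rw [Real.rpow_def_of_pos (hx i hi), mul_comm]

theorem powerMean_inv (hw : ∀ i ∈ t, 0 ≤ w i) (hx : ∀ i ∈ t, 0 ≤ x i) :
    powerMean t w x⁻¹ s = (powerMean t w x (-s))⁻¹ := by
  rcases eq_or_ne s 0 with rfl | hs
  · rw [neg_zero, powerMean_zero, powerMean_zero, ← Finset.prod_inv_distrib]
    exact Finset.prod_congr rfl fun i hi => Real.inv_rpow (hx i hi) _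
  · have hpow : ∀ i ∈ t, w i * x⁻¹ i ^ s = w i * x i ^ (-s) := fun i hi => by
      rw [Pi.inv_apply, Real.inv_rpow (hx i hi), Real.rpow_neg (hx i hi)]
    have hsum : 0 ≤ ∑ i ∈ t, w i * x i ^ (-s) :=
      Finset.sum_nonneg fun i hi => mul_nonneg (hw i hi) (Real.rpow_nonneg (hx i hi) _)
    rw [powerMean_of_ne_zero hs, powerMean_of_ne_zero (neg_ne_zero.2 hs),
      Finset.sum_congr rfl hpow, ← Real.rpow_neg hsum, one_div_neg_eq_neg_one_div, neg_neg]

theorem powerMean_zero_le (hw : ∀ i ∈ t, 0 ≤ w i) (hw₁ : ∑ i ∈ t, w i = 1)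
    (hx : ∀ i ∈ t, 0 ≤ x i) (hs : 0 ≤ s) : powerMean t w x 0 ≤ powerMean t w x s := by
  rcases hs.eq_or_lt with rfl | hs
  · exact le_rfl
  have hprod : (∏ i ∈ t, x i ^ w i) ^ s = ∏ i ∈ t, (x i ^ s) ^ w i := by
    rw [← Real.finsetProd_rpow t _ fun i hi => Real.rpow_nonneg (hx i hi) _]
    exact Finset.prod_congr rfl fun i hi => by
      rw [← Real.rpow_mul (hx i hi), ← Real.rpow_mul (hx i hi), mul_comm]
  have amgm : (∏ i ∈ t, x i ^ w i) ^ s ≤ ∑ i ∈ t, w i * x i ^ s :=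
    hprod.trans_le <| Real.geom_mean_le_arith_mean_weighted t w _ hw hw₁ fun i hi =>
      Real.rpow_nonneg (hx i hi) s
  have hnonneg : 0 ≤ ∏ i ∈ t, x i ^ w i :=
    Finset.prod_nonneg fun i hi => Real.rpow_nonneg (hx i hi) _
  rw [powerMean_zero, powerMean_of_ne_zero hs.ne', one_div]
  exact (Real.le_rpow_inv_iff_of_pos hnonneg ((Real.rpow_nonneg hnonneg s).trans amgm) hs).2 amgm

theorem powerMean_le_powerMean_of_pos (hw : ∀ i ∈ t, 0 ≤ w i) (hw₁ : ∑ i ∈ t, w i = 1)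
    (hx : ∀ i ∈ t, 0 ≤ x i) (hr : 0 < r) (hrs : r ≤ s) :
    powerMean t w x r ≤ powerMean t w x s := by
  have hs : 0 < s := hr.trans_le hrs
  have hsum (p : ℝ) : 0 ≤ ∑ i ∈ t, w i * x i ^ p :=
    Finset.sum_nonneg fun i hi => mul_nonneg (hw i hi) (Real.rpow_nonneg (hx i hi) _)
  have jensen : ∑ i ∈ t, w i * x i ^ r ≤ (∑ i ∈ t, w i * (x i ^ r) ^ (s / r)) ^ (1 / (s / r)) :=
    Real.arith_mean_le_rpow_mean t w _ hw hw₁ (fun i hi => Real.rpow_nonneg (hx i hi) r)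
      ((one_le_div hr).2 hrs)
  have hpow : ∀ i ∈ t, w i * (x i ^ r) ^ (s / r) = w i * x i ^ s := fun i hi => by
    rw [← Real.rpow_mul (hx i hi), mul_div_cancel₀ s hr.ne']
  rw [powerMean_of_ne_zero hr.ne', powerMean_of_ne_zero hs.ne']
  calc (∑ i ∈ t, w i * x i ^ r) ^ (1 / r)
      ≤ ((∑ i ∈ t, w i * x i ^ s) ^ (r / s)) ^ (1 / r) := by
        rw [Finset.sum_congr rfl hpow, one_div_div] at jensen
        exact Real.rpow_le_rpow (hsum r) jensen (one_div_nonneg.2 hr.le)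
    _ = (∑ i ∈ t, w i * x i ^ s) ^ (1 / s) := by
        rw [← Real.rpow_mul (hsum s), div_mul_div_cancel₀' hr.ne']

theorem monotoneOn_powerMean_Ici (hw : ∀ i ∈ t, 0 ≤ w i) (hw₁ : ∑ i ∈ t, w i = 1)
    (hx : ∀ i ∈ t, 0 ≤ x i) : MonotoneOn (powerMean t w x) (Set.Ici 0) := by
  intro r (hr : 0 ≤ r) s hs hrs
  rcases hr.eq_or_lt with rfl | hr
  · exact powerMean_zero_le hw hw₁ hx hs
  · exact powerMean_le_powerMean_of_pos hw hw₁ hx hr hrs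

theorem monotoneOn_powerMean_Iic (hw : ∀ i ∈ t, 0 ≤ w i) (hw₁ : ∑ i ∈ t, w i = 1)
    (hx : ∀ i ∈ t, 0 < x i) : MonotoneOn (powerMean t w x) (Set.Iic 0) := by
  intro r (hr : r ≤ 0) s (hs : s ≤ 0) hrs
  have hx_inv : ∀ i ∈ t, 0 < x⁻¹ i := fun i hi => inv_pos.2 (hx i hi)
  have hx_inv_nonneg : ∀ i ∈ t, 0 ≤ x⁻¹ i := fun i hi => (hx_inv i hi).le
  have hreflect (p : ℝ) : powerMean t w x p = (powerMean t w x⁻¹ (-p))⁻¹ := by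
    rw [powerMean_inv hw fun i hi => (hx i hi).le, neg_neg, inv_inv]
  have hpos : 0 < powerMean t w x⁻¹ (-s) := by
    refine lt_of_lt_of_le ?_ (powerMean_zero_le hw hw₁ hx_inv_nonneg (neg_nonneg.2 hs))
    rw [powerMean_zero_eq_exp_sum_log hx_inv]
    exact Real.exp_pos _
  have hmono : powerMean t w x⁻¹ (-s) ≤ powerMean t w x⁻¹ (-r) :=
    monotoneOn_powerMean_Ici hw hw₁ hx_inv_nonneg (Set.mem_Ici.2 (neg_nonneg.2 hs))
      (Set.mem_Ici.2 (neg_nonneg.2 hr)) (neg_le_neg hrs)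
  rw [hreflect r, hreflect s]
  exact inv_anti₀ hpos hmono

theorem monotone_powerMean (hw : ∀ i ∈ t, 0 ≤ w i) (hw₁ : ∑ i ∈ t, w i = 1)
    (hx : ∀ i ∈ t, 0 < x i) : Monotone (powerMean t w x) :=
  (monotoneOn_powerMean_Iic hw hw₁ hx).Iic_union_Ici
    (monotoneOn_powerMean_Ici hw hw₁ fun i hi => (hx i hi).le)

end PowerMean

section EigenbasisWeight

variable {m 𝕜 : Type*} [Fintype m] [DecidableEq m] [RCLike 𝕜] {G X : Matrix m m 𝕜}

/-- The weight `⟨uᵢ, G uᵢ⟩` which `G` gives to the `i`-th vector `uᵢ` of the orthonormal eigenbasis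
of the Hermitian matrix `X`, encoded as a diagonal entry of `G` in that basis. The real part is
taken so that the weight is a real number; it loses nothing when `G` is Hermitian. -/
noncomputable def eigenbasisWeight (G : Matrix m m 𝕜) (hX : X.IsHermitian) (i : m) : ℝ :=
  RCLike.re ((star (hX.eigenvectorUnitary : Matrix m m 𝕜) * G * hX.eigenvectorUnitary) i i)

theorem re_trace_mul_cfc (G : Matrix m m 𝕜) (hX : X.IsHermitian) (f : ℝ → ℝ) :
    RCLike.re (G * hX.cfc f).trace = ∑ i, eigenbasisWeight G hX i * f (hX.eigenvalues i) := by
  set U := (hX.eigenvectorUnitary : Matrix m m 𝕜)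
  have htrace : (G * hX.cfc f).trace =
      (star U * G * U * diagonal fun i => (f (hX.eigenvalues i) : 𝕜)).trace := by
    rw [IsHermitian.cfc, Unitary.conjStarAlgAut_apply, ← Matrix.mul_assoc, trace_mul_comm]
    simp only [Matrix.mul_assoc]
    rfl
  rw [htrace, trace, map_sum]
  refine Finset.sum_congr rfl fun i _ => ?_
  rw [diag_apply, mul_diagonal, RCLike.re_mul_ofReal, eigenbasisWeight]

theorem eigenbasisWeight_nonneg (hG : G.PosSemidef) (hX : X.IsHermitian) (i : m) :
    0 ≤ eigenbasisWeight G hX i :=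
  (RCLike.nonneg_iff.1 (hG.conjTranspose_mul_mul_same _).diag_nonneg).1

theorem sum_eigenbasisWeight (G : Matrix m m 𝕜) (hX : X.IsHermitian) :
    ∑ i, eigenbasisWeight G hX i = RCLike.re G.trace := by
  set U := (hX.eigenvectorUnitary : Matrix m m 𝕜)
  have htrace : (star U * G * U).trace = G.trace := by
    rw [trace_mul_cycle, Unitary.mul_star_self_of_mem hX.eigenvectorUnitary.2, Matrix.one_mul]
  rw [← htrace, trace, map_sum]
  rfl

end EigenbasisWeight

theorem genMean_eq_powerMean {n : ℕ} (G : Matrix (Fin n) (Fin n) ℂ)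
    {X : Matrix (Fin n) (Fin n) ℂ} (hX : X.PosDef) :
    genMean G hX.1 = powerMean Finset.univ (eigenbasisWeight G hX.1) hX.1.eigenvalues := by
  funext s
  have htrace (f : ℝ → ℝ) : (G * hX.1.cfc f).trace.re =
      ∑ i, eigenbasisWeight G hX.1 i * f (hX.1.eigenvalues i) := re_trace_mul_cfc G hX.1 f
  rcases eq_or_ne s 0 with rfl | hs
  · rw [powerMean_zero_eq_exp_sum_log fun i _ => hX.eigenvalues_pos i, genMean, if_pos rfl, htrace]
  · rw [powerMean_of_ne_zero hs, genMean, if_neg hs, htrace]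

theorem genMean_comparable_general {n : ℕ} {X G : Matrix (Fin n) (Fin n) ℂ}
    (hX : X.PosDef) (hG : G.PosSemidef) (hGtr : G.trace = 1) : Monotone (genMean G hX.1) := by
  have hsum : ∑ i, eigenbasisWeight G hX.1 i = 1 := by
    rw [sum_eigenbasisWeight, hGtr, RCLike.one_re]
  rw [genMean_eq_powerMean G hX]
  exact monotone_powerMean (fun i _ => eigenbasisWeight_nonneg hG hX.1 i) hsum
    fun i _ => hX.eigenvalues_pos i

/-- comparability of the weighted generalized means.  For a real symmetric
positive definite `X` and a real symmetric positive semidefinite weight `G` with `tr G = 1`,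
`M_r(X) ≤ M_s(X)` whenever `-1 ≤ r ≤ s ≤ 1`. -/
theorem genMean_comparable {n : ℕ} (X G : Matrix (Fin n) (Fin n) ℂ)
    (hXre : ∀ i j, (X i j).im = 0) (hX : X.PosDef)
    (hGre : ∀ i j, (G i j).im = 0) (hG : G.PosSemidef) (hGtr : G.trace = 1)
    (r s : ℝ) (hr : -1 ≤ r) (hrs : r ≤ s) (hs : s ≤ 1) :
    genMean G hX.1 r ≤ genMean G hX.1 s :=
  genMean_comparable_general hX hG hGtr hrs
end

section
/- Let η > 0 and let E be a 2×2 real symmetric positive definite matrix (viewed as complex Hermitian) satisfying both E ≥ ((2η+1)/4) I₂ and E ≥ F_R(η)⁻¹ in the Loewner order, where F_R(η) := (1/(η(η+1))) [[2η+1, −i],[i, 2η+1]]. Then the unweighted generalized mean errors obey: ((1/2) tr E^s)^{1/s} ≥ (2η+1)/4 for every s ∈ [−1, 0); √(det E) ≥ (η+1)/2; and ((1/2) tr E^s)^{1/s} ≥ (η+1)/2 for every s ∈ (0, 1]. -/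
open Matrix ComplexOrder

/-- The RLD-based quantum Fisher information matrix
`F_R(η) = (1/(η(η+1))) [[2η+1, -i],[i, 2η+1]]`. -/
noncomputable def FR (η : ℝ) : Matrix (Fin 2) (Fin 2) ℂ :=
  (((η * (η + 1))⁻¹ : ℝ) : ℂ) •
    !![((2*η+1 : ℝ) : ℂ), -Complex.I; Complex.I, ((2*η+1 : ℝ) : ℂ)]

/-!
`E` equals its transpose, and transposition preserves positivity, so `E - F_R⁻¹ ≥ 0` may be averaged
with its transpose. The antisymmetric imaginary part of `F_R⁻¹` cancels and `E - c ≥ 0` remains,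
where `c = (2η+1)/4`; so the eigenvalues of `E` are at least `c`, which settles negative exponents.
The imaginary part enters the `2×2` determinant additively and gives `det (E - c) ≥ 1/16`, whence
`√(det E) ≥ c + 1/4 = (η+1)/2` by Minkowski's determinant inequality. Finally `√(det E)` is the
geometric mean of the eigenvalues, which every power mean with positive exponent dominates.
-/

section PowerMean

variable {ι : Type*} {t : Finset ι} {w x : ι → ℝ} {s : ℝ}

theorem geom_mean_le_power_mean_weighted (hw : ∀ i ∈ t, 0 ≤ w i) (hw_sum : ∑ i ∈ t, w i = 1)
    (hx : ∀ i ∈ t, 0 ≤ x i) (hs : 0 < s) :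
    ∏ i ∈ t, x i ^ w i ≤ (∑ i ∈ t, w i * x i ^ s) ^ (1 / s) := by
  have hxs : ∀ i ∈ t, 0 ≤ x i ^ s := fun i hi => Real.rpow_nonneg (hx i hi) s
  have hxw : ∀ i ∈ t, 0 ≤ x i ^ w i := fun i hi => Real.rpow_nonneg (hx i hi) (w i)
  rw [one_div, Real.le_rpow_inv_iff_of_pos (Finset.prod_nonneg hxw)
    (Finset.sum_nonneg fun i hi => mul_nonneg (hw i hi) (hxs i hi)) hs]
  calc (∏ i ∈ t, x i ^ w i) ^ s = ∏ i ∈ t, (x i ^ w i) ^ s :=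
        (Real.finsetProd_rpow t _ hxw s).symm
    _ = ∏ i ∈ t, (x i ^ s) ^ w i :=
        Finset.prod_congr rfl fun i hi => by
          rw [← Real.rpow_mul (hx i hi), mul_comm, Real.rpow_mul (hx i hi)]
    _ ≤ ∑ i ∈ t, w i * x i ^ s := Real.geom_mean_le_arith_mean_weighted t w _ hw hw_sum hxs

theorem le_power_mean_weighted_of_neg {c : ℝ} (hw : ∀ i ∈ t, 0 ≤ w i)
    (hw_sum : ∑ i ∈ t, w i = 1) (hc : 0 < c) (hx : ∀ i ∈ t, c ≤ x i) (hs : s < 0) :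
    c ≤ (∑ i ∈ t, w i * x i ^ s) ^ (1 / s) := by
  have hxs : ∀ i ∈ t, 0 < x i ^ s := fun i hi => Real.rpow_pos_of_pos (hc.trans_le (hx i hi)) s
  have hsum_pos : 0 < ∑ i ∈ t, w i * x i ^ s :=
    (Finset.prod_pos fun i hi => Real.rpow_pos_of_pos (hxs i hi) (w i)).trans_le
      (Real.geom_mean_le_arith_mean_weighted t w _ hw hw_sum fun i hi => (hxs i hi).le)
  rw [one_div, Real.le_rpow_inv_iff_of_neg hc hsum_pos hs]
  calc ∑ i ∈ t, w i * x i ^ s ≤ ∑ i ∈ t, w i * c ^ s :=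
        Finset.sum_le_sum fun i hi => mul_le_mul_of_nonneg_left
          (Real.rpow_le_rpow_of_nonpos hc (hx i hi) hs.le) (hw i hi)
    _ = c ^ s := by rw [← Finset.sum_mul, hw_sum, one_mul]

end PowerMean

section SpectralMean

variable {𝕜 n : Type*} [RCLike 𝕜] [Fintype n] [DecidableEq n] {A : Matrix n n 𝕜}

theorem trace_cfc_eq_sum_eigenvalues_s13 (hA : A.IsHermitian) (f : ℝ → ℝ) :
    (hA.cfc f).trace = ∑ i, (f (hA.eigenvalues i) : 𝕜) := by
  rw [IsHermitian.cfc, Unitary.conjStarAlgAut_apply, trace_mul_cycle,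
    Unitary.coe_star_mul_self, one_mul, trace_diagonal]
  rfl

theorem le_eigenvalues_of_posSemidef_sub_smul_one {c : ℝ} (hA : A.IsHermitian)
    (hAc : (A - (c : 𝕜) • 1).PosSemidef) (i : n) : c ≤ hA.eigenvalues i := by
  open scoped MatrixOrder in
  have hle : algebraMap ℝ (Matrix n n 𝕜) c ≤ A := by
    rw [Matrix.le_iff]
    simpa [Algebra.algebraMap_eq_smul_one] using hAc
  exact (algebraMap_le_iff_le_spectrum hA.isSelfAdjoint).1 hle _
    (hA.eigenvalues_mem_spectrum_real i)

/-- The unweighted generalized `s`-mean `((1/n) tr A^s)^(1/s)` of an `n × n` Hermitian matrix, for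
`s ≠ 0`; the power `A^s` is taken in the spectral functional calculus. -/
noncomputable def spectralMean (hA : A.IsHermitian) (s : ℝ) : ℝ :=
  ((1 / Fintype.card n) * RCLike.re (hA.cfc (fun x => x ^ s)).trace) ^ (1 / s)

theorem spectralMean_eq_power_mean_eigenvalues (hA : A.IsHermitian) (s : ℝ) :
    spectralMean hA s = (∑ i, (1 / Fintype.card n) * hA.eigenvalues i ^ s) ^ (1 / s) := by
  simp only [spectralMean, trace_cfc_eq_sum_eigenvalues_s13, map_sum, RCLike.ofReal_re, Finset.mul_sum]

variable [Nonempty n]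

theorem le_spectralMean_of_neg {c s : ℝ} (hA : A.IsHermitian) (hc : 0 < c)
    (hAc : (A - (c : 𝕜) • 1).PosSemidef) (hs : s < 0) : c ≤ spectralMean hA s := by
  rw [spectralMean_eq_power_mean_eigenvalues]
  exact le_power_mean_weighted_of_neg (fun _ _ => by positivity) (by simp) hc
    (fun i _ => le_eigenvalues_of_posSemidef_sub_smul_one hA hAc i) hs

theorem det_rpow_one_div_card_le_spectralMean {s : ℝ} (hA : A.PosSemidef) (hs : 0 < s) :
    RCLike.re A.det ^ (1 / Fintype.card n : ℝ) ≤ spectralMean hA.isHermitian s := by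
  have hdet : RCLike.re A.det = ∏ i, hA.isHermitian.eigenvalues i := by
    rw [hA.isHermitian.det_eq_prod_eigenvalues, ← RCLike.ofReal_prod, RCLike.ofReal_re]
  rw [hdet, spectralMean_eq_power_mean_eigenvalues,
    ← Real.finsetProd_rpow _ _ fun i _ => hA.eigenvalues_nonneg i]
  exact geom_mean_le_power_mean_weighted (fun _ _ => by positivity) (by simp)
    (fun i _ => hA.eigenvalues_nonneg i) hs

end SpectralMean

section SkewPerturbation

variable {𝕜 n : Type*} [RCLike 𝕜]

theorem isSymm_of_isHermitian_of_im_eq_zero {A : Matrix n n 𝕜} (hA : A.IsHermitian)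
    (hA_im : ∀ i j, RCLike.im (A i j) = 0) : A.IsSymm :=
  Matrix.IsSymm.ext fun i j => by
    rw [← hA.apply i j]
    exact (RCLike.conj_eq_iff_im.2 (hA_im j i)).symm

theorem posSemidef_of_posSemidef_sub_skew {S K : Matrix n n 𝕜} (hS : S.IsSymm) (hK : Kᵀ = -K)
    (hSK : (S - K).PosSemidef) : S.PosSemidef := by
  have hS_eq : S = (2⁻¹ : 𝕜) • ((S - K) + (S - K)ᵀ) := by
    rw [transpose_sub, hS.eq, hK]
    module
  rw [hS_eq]
  exact (hSK.add hSK.transpose).smul (by positivity)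

theorem posSemidef_of_posSemidef_sub_skew_fin_two {S : Matrix (Fin 2) (Fin 2) 𝕜} {k : 𝕜}
    (hS : S.IsSymm) (hSk : (S - !![0, k; -k, 0]).PosSemidef) : S.PosSemidef := by
  refine posSemidef_of_posSemidef_sub_skew hS ?_ hSk
  ext i j
  fin_cases i <;> fin_cases j <;> simp

end SkewPerturbation

section DetFinTwo

variable {𝕜 : Type*} [RCLike 𝕜] {A : Matrix (Fin 2) (Fin 2) 𝕜}

theorem four_mul_det_le_trace_sq_fin_two (hA : A.IsHermitian) :
    4 * RCLike.re A.det ≤ RCLike.re A.trace ^ 2 := by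
  rw [hA.det_eq_prod_eigenvalues, hA.trace_eq_sum_eigenvalues, ← RCLike.ofReal_prod,
    ← RCLike.ofReal_sum, RCLike.ofReal_re, RCLike.ofReal_re, Fin.prod_univ_two, Fin.sum_univ_two,
    ← mul_assoc]
  exact four_mul_le_sq_add _ _

theorem det_sub_skew_fin_two {R : Type*} [CommRing R] {S : Matrix (Fin 2) (Fin 2) R}
    (hS : S.IsSymm) (k : R) : (S - !![0, k; -k, 0]).det = S.det + k ^ 2 := by
  simp only [det_fin_two, Matrix.sub_apply, of_apply, cons_val', cons_val_zero, cons_val_fin_one,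
    cons_val_one, hS.apply 0 1]
  ring

theorem det_add_smul_one_fin_two {R : Type*} [CommRing R] (A : Matrix (Fin 2) (Fin 2) R) (c : R) :
    (A + c • 1).det = A.det + c * A.trace + c ^ 2 := by
  simp only [det_fin_two, trace_fin_two, Matrix.add_apply, Matrix.smul_apply, smul_eq_mul,
    one_apply_eq, one_apply_ne zero_ne_one, one_apply_ne one_ne_zero]
  ring

theorem add_sq_le_det_of_posSemidef_sub {c d : ℝ} (hAc : (A - (c : 𝕜) • 1).PosSemidef)
    (hc : 0 ≤ c) (hd : d ^ 2 ≤ RCLike.re (A - (c : 𝕜) • 1).det) :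
    (c + d) ^ 2 ≤ RCLike.re A.det := by
  set M := A - (c : 𝕜) • 1 with hM
  have hdet : RCLike.re A.det = RCLike.re M.det + c * RCLike.re M.trace + c ^ 2 := by
    rw [← sub_add_cancel A ((c : 𝕜) • 1), ← hM, det_add_smul_one_fin_two, ← RCLike.ofReal_pow,
      map_add, map_add, RCLike.re_ofReal_mul, RCLike.ofReal_re]
  have htrace : 2 * d ≤ RCLike.re M.trace := by
    refine le_of_sq_le_sq ?_ (RCLike.nonneg_iff.1 hAc.trace_nonneg).1
    calc (2 * d) ^ 2 = 4 * d ^ 2 := by ring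
      _ ≤ 4 * RCLike.re M.det := by gcongr
      _ ≤ RCLike.re M.trace ^ 2 := four_mul_det_le_trace_sq_fin_two hAc.isHermitian
  calc (c + d) ^ 2 = d ^ 2 + c * (2 * d) + c ^ 2 := by ring
    _ ≤ RCLike.re M.det + c * RCLike.re M.trace + c ^ 2 := by gcongr
    _ = RCLike.re A.det := hdet.symm

theorem sq_le_det_re_of_posSemidef_sub_skew {S : Matrix (Fin 2) (Fin 2) ℂ} {d : ℝ} (hS : S.IsSymm)
    (hSd : (S - !![0, d * Complex.I; -(d * Complex.I), 0]).PosSemidef) : d ^ 2 ≤ S.det.re := by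
  have hdet_nonneg := (Complex.nonneg_iff.1 hSd.det_nonneg).1
  have hd_sq : (d * Complex.I) ^ 2 = ((-d ^ 2 : ℝ) : ℂ) := by
    rw [mul_pow, Complex.I_sq]
    push_cast
    ring
  rw [det_sub_skew_fin_two hS, hd_sq, Complex.add_re, Complex.ofReal_re] at hdet_nonneg
  linarith

theorem add_le_sqrt_det_re_of_posSemidef_sub {E : Matrix (Fin 2) (Fin 2) ℂ} {c d : ℝ}
    (hE : E.IsSymm) (hc : 0 ≤ c)
    (hEcd : (E - (c : ℂ) • 1 - !![0, d * Complex.I; -(d * Complex.I), 0]).PosSemidef) :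
    c + d ≤ √E.det.re := by
  have hEc_symm : (E - (c : ℂ) • 1).IsSymm := hE.sub (isSymm_one.smul _)
  exact Real.le_sqrt_of_sq_le <| add_sq_le_det_of_posSemidef_sub
    (posSemidef_of_posSemidef_sub_skew_fin_two hEc_symm hEcd) hc
    (sq_le_det_re_of_posSemidef_sub_skew hEc_symm hEcd)

end DetFinTwo

section CoherentSignal

theorem FR_inv {η : ℝ} (hη : η ≠ 0) (hη_add_one : η + 1 ≠ 0) :
    (FR η)⁻¹ = (((2 * η + 1) / 4 : ℝ) : ℂ) • (1 : Matrix (Fin 2) (Fin 2) ℂ) +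
      !![0, ((1 / 4 : ℝ) : ℂ) * Complex.I; -(((1 / 4 : ℝ) : ℂ) * Complex.I), 0] := by
  have hprod : !![((2 * η + 1 : ℝ) : ℂ), -Complex.I; Complex.I, ((2 * η + 1 : ℝ) : ℂ)] *
      ((((2 * η + 1) / 4 : ℝ) : ℂ) • (1 : Matrix (Fin 2) (Fin 2) ℂ) +
        !![0, ((1 / 4 : ℝ) : ℂ) * Complex.I; -(((1 / 4 : ℝ) : ℂ) * Complex.I), 0]) =
      ((η * (η + 1) : ℝ) : ℂ) • 1 := by
    rw [← Matrix.ext_iff]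
    simp only [Fin.forall_fin_two, Matrix.mul_apply, Fin.sum_univ_two, Matrix.add_apply,
      Matrix.smul_apply, of_apply, cons_val', cons_val_zero, cons_val_one, cons_val_fin_one,
      one_apply_eq, one_apply_ne zero_ne_one, one_apply_ne one_ne_zero, smul_eq_mul]
    push_cast
    refine ⟨⟨?_, by ring⟩, by ring, ?_⟩ <;> linear_combination (1 / 4 : ℂ) * Complex.I_sq
  apply Matrix.inv_eq_right_inv
  rw [FR, Matrix.smul_mul, hprod, smul_smul, ← Complex.ofReal_mul,
    inv_mul_cancel₀ (mul_ne_zero hη hη_add_one), Complex.ofReal_one, one_smul]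

theorem coherent_signal_error_bounds_general {η : ℝ} {E : Matrix (Fin 2) (Fin 2) ℂ} (hη : 0 < η)
    (hE_im : ∀ i j, (E i j).im = 0) (hE : E.IsHermitian) (hRLD : (E - (FR η)⁻¹).PosSemidef) :
    (∀ s : ℝ, s < 0 → (2 * η + 1) / 4 ≤ ((1 / 2) * (hE.cfc (fun x => x ^ s)).trace.re) ^ (1 / s)) ∧
    (η + 1) / 2 ≤ √E.det.re ∧
    (∀ s : ℝ, 0 < s → (η + 1) / 2 ≤ ((1 / 2) * (hE.cfc (fun x => x ^ s)).trace.re) ^ (1 / s)) := by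
  have hc : 0 < (2 * η + 1) / 4 := by positivity
  have hE_symm : E.IsSymm := isSymm_of_isHermitian_of_im_eq_zero hE hE_im
  rw [FR_inv hη.ne' (by positivity), ← sub_sub] at hRLD
  have hSLD := posSemidef_of_posSemidef_sub_skew_fin_two (hE_symm.sub (isSymm_one.smul _)) hRLD
  have hdet : (η + 1) / 2 ≤ √E.det.re := by
    calc (η + 1) / 2 = (2 * η + 1) / 4 + 1 / 4 := by ring
      _ ≤ √E.det.re := add_le_sqrt_det_re_of_posSemidef_sub hE_symm hc.le hRLD
  have hE_psd : E.PosSemidef := hE.posSemidef_iff_eigenvalues_nonneg.2 fun i =>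
    hc.le.trans (le_eigenvalues_of_posSemidef_sub_smul_one hE hSLD i)
  refine ⟨fun s hs => ?_, hdet, fun s hs => ?_⟩
  · simpa only [spectralMean, Fintype.card_fin, Nat.cast_ofNat, RCLike.re_to_complex] using
      le_spectralMean_of_neg hE hc hSLD hs
  · refine hdet.trans ?_
    rw [Real.sqrt_eq_rpow]
    simpa only [spectralMean, Fintype.card_fin, Nat.cast_ofNat, RCLike.re_to_complex] using
      det_rpow_one_div_card_le_spectralMean hE_psd hs

end CoherentSignal

/-- Let `η > 0` and let `E` be a `2×2` real symmetric positive definite matrix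
(viewed as complex Hermitian) with `E ≥ ((2η+1)/4) I₂` and `E ≥ F_R(η)⁻¹` in the Loewner
order.  Then `((1/2) tr E^s)^(1/s) ≥ (2η+1)/4` for `s ∈ [-1,0)`, `√(det E) ≥ (η+1)/2`, and
`((1/2) tr E^s)^(1/s) ≥ (η+1)/2` for `s ∈ (0,1]`, where `E^s` is the matrix power via the
spectral decomposition. -/
theorem coherent_signal_error_bounds (η : ℝ) (hη : 0 < η)
    (E : Matrix (Fin 2) (Fin 2) ℂ)
    (hEre : ∀ i j, (E i j).im = 0) (hE : E.PosDef)
    (hSLD : (E - (((2*η+1)/4 : ℝ) : ℂ) • (1 : Matrix (Fin 2) (Fin 2) ℂ)).PosSemidef)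
    (hRLD : (E - (FR η)⁻¹).PosSemidef) :
    (∀ s : ℝ, s ∈ Set.Ico (-1 : ℝ) 0 →
      ((1/2) * (hE.1.cfc (fun x => x ^ s)).trace.re) ^ (1/s) ≥ (2*η+1)/4) ∧
    Real.sqrt E.det.re ≥ (η+1)/2 ∧
    (∀ s : ℝ, s ∈ Set.Ioc (0 : ℝ) 1 →
      ((1/2) * (hE.1.cfc (fun x => x ^ s)).trace.re) ^ (1/s) ≥ (η+1)/2) := by
  obtain ⟨hneg, hdet, hpos⟩ := coherent_signal_error_bounds_general hη hEre hE.1 hRLD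
  exact ⟨fun s hs => hneg s hs.2, hdet, fun s hs => hpos s hs.1⟩
end
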